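/- Let V₁, V₂: ℝ → [0,∞) be Orlicz functions satisfying V₁(x)/V₂(x) → ∞ as |x| → ∞ and ∫_ℝ V₁(x) e^{αV₂(x)} dx < ∞ for all α ∈ (-∞,0). Then there exists R̄ ∈ (0,∞) such that for all 0 < R ≤ R̄ and every fixed k ∈ ℕ: lim_{ε→0} lim_{n→∞} d_w( λ^{(n,k)}_{1,V₁ | R+ε,V₂}, λ^{(n,k)}_{R,V₂} ) = 0, where λ^{(n,k)}_{1,V₁ | R+ε,V₂} is the law of the first k coordinates of a uniform random point X₁^{n,V₁} on B_1^{n,V₁} conditioned on X₁^{n,V₁} ∈ B_{R+ε}^{n,V₂}, λ^{(n,k)}_{R,V₂} is the law of the first k coordinates of a uniform random point on B_R^{n,V₂}, and d_w is a metric inducing weak convergence of probability measures on ℝ^k (e.g., the Lévy–Prokhorov metric). -/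

import Mathlib

open MeasureTheory Real Filter Topology ENNReal Classical

noncomputable section

/-- An Orlicz function: convex, symmetric, vanishing only at `0`, nonnegative. -/
def IsOrlicz (V : ℝ → ℝ) : Prop :=
  ConvexOn ℝ Set.univ V ∧ (∀ x, V (-x) = V x) ∧ V 0 = 0 ∧ (∀ x, x ≠ 0 → 0 < V x) ∧
    (∀ x, 0 ≤ V x)

/-- The Orlicz ball `B_R^{n,V} = {x ∈ ℝⁿ : ∑ V(x_k) ≤ R n}`. -/
def OrliczBall (V : ℝ → ℝ) (R : ℝ) (n : ℕ) : Set (Fin n → ℝ) :=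
  {x | ∑ i, V (x i) ≤ R * n}

/-- The uniform distribution on the Orlicz ball (normalized Lebesgue measure). -/
def unifBall (V : ℝ → ℝ) (R : ℝ) (n : ℕ) : Measure (Fin n → ℝ) :=
  (volume (OrliczBall V R n))⁻¹ • volume.restrict (OrliczBall V R n)

/-- Projection onto the first `k` coordinates. -/
def proj (k n : ℕ) (x : Fin n → ℝ) : Fin k → ℝ :=
  fun i => if h : (i : ℕ) < n then x ⟨i, h⟩ else 0

theorem pi_withDensity_eq {n : ℕ} (P : Measure ℝ) [IsProbabilityMeasure P] (g : ℝ → ℝ≥0∞)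
    (hg : Measurable g) [SigmaFinite (P.withDensity g)] :
    Measure.pi (fun _ : Fin n => P.withDensity g) =
      (Measure.pi fun _ : Fin n => P).withDensity (fun x => ∏ i, g (x i)) := by
  refine Measure.pi_eq fun s hs => ?_
  rw [withDensity_apply _ (MeasurableSet.univ_pi hs),
    ← lintegral_indicator (MeasurableSet.univ_pi hs)]
  have hind : ProbabilityTheory.iIndepFun
      (fun (i : Fin n) (x : Fin n → ℝ) => (s i).indicator g (x i))
      (Measure.pi fun _ : Fin n => P) :=
    ProbabilityTheory.iIndepFun_pi (X := fun i => (s i).indicator g)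
      fun i => (hg.indicator (hs i)).aemeasurable
  have hmeas : ∀ i : Fin n, Measurable fun x : Fin n → ℝ => (s i).indicator g (x i) :=
    fun i => (hg.indicator (hs i)).comp (measurable_pi_apply i)
  have hprod : ∀ x : Fin n → ℝ, (Set.univ.pi s).indicator (fun x => ∏ i, g (x i)) x
      = ∏ i ∈ Finset.univ, (s i).indicator g (x i) := by
    intro x
    by_cases hx : x ∈ Set.univ.pi s
    · rw [Set.indicator_of_mem hx]
      exact Finset.prod_congr rfl fun i _ => (Set.indicator_of_mem (hx i trivial) g).symm
    · rw [Set.indicator_of_notMem hx]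
      obtain ⟨i, hi⟩ : ∃ i, x i ∉ s i := by simpa [Set.mem_pi] using hx
      exact (Finset.prod_eq_zero (Finset.mem_univ i) (Set.indicator_of_notMem hi g)).symm
  simp_rw [hprod]
  rw [ProbabilityTheory.lintegral_prod_eq_prod_lintegral_of_indepFun _ _ hind hmeas]
  refine Finset.prod_congr rfl fun i _ => ?_
  rw [withDensity_apply _ (hs i), ← lintegral_indicator (hs i)]
  exact (measurePreserving_eval (fun _ : Fin n => P) i).lintegral_comp (hg.indicator (hs i))

/-- The Gibbs probability measure with density proportional to `exp (α V)`. -/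
def gibbs (V : ℝ → ℝ) (α : ℝ) : Measure ℝ :=
  (volume : Measure ℝ).tilted fun x => α * V x

/-- The normalizing constant of `gibbs V α`. -/
def partitionFn (V : ℝ → ℝ) (α : ℝ) : ℝ := ∫ x, Real.exp (α * V x)

theorem isProbabilityMeasure_gibbs {V : ℝ → ℝ} {α : ℝ}
    (h : Integrable fun x => Real.exp (α * V x)) : IsProbabilityMeasure (gibbs V α) :=
  isProbabilityMeasure_tilted h

theorem partitionFn_pos {V : ℝ → ℝ} {α : ℝ} (h : Integrable fun x => Real.exp (α * V x)) :
    0 < partitionFn V α :=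
  integral_exp_pos h

theorem gibbs_withDensity {V : ℝ → ℝ} (hV : Measurable V) {α : ℝ}
    (h : Integrable fun x => Real.exp (α * V x)) :
    (gibbs V α).withDensity
      (fun x => ENNReal.ofReal (partitionFn V α * Real.exp (-(α * V x)))) = volume := by
  have hZ := partitionFn_pos h
  rw [gibbs, Measure.tilted, ← withDensity_mul _ (by fun_prop) (by fun_prop)]
  convert! withDensity_one using 2
  ext x
  change ENNReal.ofReal (Real.exp (α * V x) / partitionFn V α) * _ = 1
  rw [← ENNReal.ofReal_mul (by positivity), Real.exp_neg]
  have := (Real.exp_pos (α * V x)).ne'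
  rw [show Real.exp (α * V x) / partitionFn V α * (partitionFn V α * (Real.exp (α * V x))⁻¹) = 1 by
    field_simp, ENNReal.ofReal_one]

theorem volume_eq_setLIntegral_gibbs {V : ℝ → ℝ} (hV : Measurable V) {α : ℝ}
    (h : Integrable fun x => Real.exp (α * V x)) {n : ℕ} {S : Set (Fin n → ℝ)}
    (hS : MeasurableSet S) :
    volume S = ∫⁻ x in S, ENNReal.ofReal (partitionFn V α ^ n * Real.exp (-(α * ∑ i, V (x i))))
      ∂(Measure.pi fun _ : Fin n => gibbs V α) := by
  have := isProbabilityMeasure_gibbs h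
  have hZ := partitionFn_pos h
  have hw := gibbs_withDensity hV h
  have : SigmaFinite ((gibbs V α).withDensity
      (fun x => ENNReal.ofReal (partitionFn V α * Real.exp (-(α * V x))))) := by
    rw [hw]; infer_instance
  have key := pi_withDensity_eq (n := n) (gibbs V α)
    (fun x => ENNReal.ofReal (partitionFn V α * Real.exp (-(α * V x)))) (by fun_prop)
  rw [hw] at key
  rw [volume_pi, key, withDensity_apply _ hS]
  congr 1
  ext x
  rw [← ENNReal.ofReal_prod_of_nonneg fun i _ => by positivity, Finset.prod_mul_distrib,
    ← Real.exp_sum, Finset.sum_neg_distrib, Finset.mul_sum]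
  simp

theorem volume_le_gibbs {V : ℝ → ℝ} (hV : Measurable V) {α : ℝ} (hα : α ≤ 0)
    (h : Integrable fun x => Real.exp (α * V x)) {n : ℕ} {S : Set (Fin n → ℝ)}
    (hS : MeasurableSet S) {c : ℝ} (hc : ∀ x ∈ S, ∑ i, V (x i) ≤ c) :
    volume S ≤ ENNReal.ofReal (partitionFn V α ^ n * Real.exp (-(α * c))) *
      (Measure.pi fun _ : Fin n => gibbs V α) S := by
  have hZ := partitionFn_pos h
  rw [volume_eq_setLIntegral_gibbs hV h hS, ← setLIntegral_const]
  refine setLIntegral_mono' hS fun x hx => ENNReal.ofReal_le_ofReal ?_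
  have := mul_le_mul_of_nonpos_left (hc x hx) hα
  gcongr

theorem gibbs_le_volume {V : ℝ → ℝ} (hV : Measurable V) {α : ℝ} (hα : α ≤ 0)
    (h : Integrable fun x => Real.exp (α * V x)) {n : ℕ} {S : Set (Fin n → ℝ)}
    (hS : MeasurableSet S) {c : ℝ} (hc : ∀ x ∈ S, c ≤ ∑ i, V (x i)) :
    ENNReal.ofReal (partitionFn V α ^ n * Real.exp (-(α * c))) *
      (Measure.pi fun _ : Fin n => gibbs V α) S ≤ volume S := by
  have hZ := partitionFn_pos h
  rw [volume_eq_setLIntegral_gibbs hV h hS, ← setLIntegral_const]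
  refine setLIntegral_mono' hS fun x hx => ENNReal.ofReal_le_ofReal ?_
  have := mul_le_mul_of_nonpos_left (hc x hx) hα
  gcongr

theorem tendsto_pi_measure_lt_sum (P : Measure ℝ) [IsProbabilityMeasure P] {f : ℝ → ℝ}
    (hf : Measurable f) (hint : Integrable f P) {c : ℝ} (hc : ∫ x, f x ∂P < c) :
    Tendsto (fun n : ℕ => (Measure.pi fun _ : Fin n => P) {x | c * n < ∑ i, f (x i)})
      atTop (𝓝 0) := by
  set Q : Measure (ℕ → ℝ) := Measure.infinitePi fun _ : ℕ => P
  have hev : ∀ i : ℕ, Q.map (fun ω => ω i) = P := fun i => Measure.infinitePi_map_eval _ i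
  have hident : ∀ i : ℕ, ProbabilityTheory.IdentDistrib (fun ω : ℕ → ℝ => f (ω i))
      (fun ω : ℕ → ℝ => f (ω 0)) Q Q := fun i => by
    have h0 : ProbabilityTheory.IdentDistrib (fun ω : ℕ → ℝ => ω i) (fun ω : ℕ → ℝ => ω 0) Q Q :=
      ⟨(measurable_pi_apply i).aemeasurable, (measurable_pi_apply 0).aemeasurable, by
        rw [hev, hev]⟩
    exact h0.comp hf
  have hind : ProbabilityTheory.iIndepFun (fun (i : ℕ) (ω : ℕ → ℝ) => f (ω i)) Q :=
    ProbabilityTheory.iIndepFun_infinitePi fun _ => hf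
  have hint0 : Integrable (fun ω : ℕ → ℝ => f (ω 0)) Q := by
    have : Integrable f (Q.map fun ω => ω 0) := by rwa [hev]
    exact this.comp_measurable (measurable_pi_apply 0)
  have hmean : ∫ ω : ℕ → ℝ, f (ω 0) ∂Q = ∫ x, f x ∂P := by
    rw [← hev 0, integral_map (measurable_pi_apply 0).aemeasurable hf.aestronglyMeasurable]
  have hlaw := ProbabilityTheory.strong_law_ae_real (fun (i : ℕ) (ω : ℕ → ℝ) => f (ω i)) hint0
    (fun i j hij => hind.indepFun hij) hident
  have hpi : ∀ n : ℕ, (Measure.pi fun _ : Fin n => P) {x | c * n < ∑ i, f (x i)} =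
      Q {ω | c * n < ∑ i ∈ Finset.range n, f (ω i)} := by
    intro n
    have hm : Q.map (fun ω (i : Fin n) => ω i) = Measure.pi fun _ : Fin n => P := by
      rw [← Measure.infinitePi_eq_pi]
      exact Measure.map_infinitePi_infinitePi_of_inj (P := fun _ : ℕ => P) Fin.val_injective
    rw [← hm, Measure.map_apply (by fun_prop)
      (measurableSet_lt measurable_const (by fun_prop))]
    congr 1
    ext ω
    simp [Finset.sum_range]
  simp_rw [hpi]
  have hmeas : ∀ n : ℕ, MeasurableSet {ω : ℕ → ℝ | c * n < ∑ i ∈ Finset.range n, f (ω i)} :=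
    fun n => measurableSet_lt measurable_const (by fun_prop)
  refine (tendsto_measure_of_ae_tendsto_indicator_of_isFiniteMeasure (A := ∅) atTop
    MeasurableSet.empty hmeas ?_).trans (by simp)
  filter_upwards [hlaw] with ω hω
  rw [hmean] at hω
  filter_upwards [hω.eventually (eventually_lt_nhds hc), eventually_gt_atTop 0] with n hn hn0
  have : (0 : ℝ) < n := by exact_mod_cast hn0
  rw [div_lt_iff₀ this] at hn
  simp [hn.le]

theorem map_pi_comp_injective {ι κ : Type*} [Fintype ι] [Fintype κ] (P : Measure ℝ)
    [IsProbabilityMeasure P] {f : κ → ι} (hf : Function.Injective f) :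
    (Measure.pi fun _ : ι => P).map (fun x i => x (f i)) = Measure.pi fun _ : κ => P := by
  rw [← Measure.infinitePi_eq_pi, ← Measure.infinitePi_eq_pi]
  exact Measure.map_infinitePi_infinitePi_of_inj (P := fun _ : ι => P) hf

theorem iIndepFun_blocks (P : Measure ℝ) [IsProbabilityMeasure P] {n q k : ℕ}
    {σ : Fin q × Fin k → Fin n} (hσ : Function.Injective σ) :
    ProbabilityTheory.iIndepFun (fun (j : Fin q) (x : Fin n → ℝ) (i : Fin k) => x (σ (j, i)))
      (Measure.pi fun _ : Fin n => P) := by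
  rw [ProbabilityTheory.iIndepFun_iff_map_fun_eq_pi_map
    fun j => Measurable.aemeasurable (by fun_prop)]
  simp_rw [map_pi_comp_injective P fun a b hab => (Prod.ext_iff.1 (hσ (a₁ := (_, a)) (a₂ := (_, b)) hab)).2]
  have h1 : (Measure.pi fun _ : Fin n => P).map (fun x p => x (σ p)) =
      Measure.infinitePi fun _ : Fin q × Fin k => P := by
    rw [map_pi_comp_injective P hσ, Measure.infinitePi_eq_pi]
  have h2 := Measure.infinitePi_map_curry (fun (_ : Fin q) (_ : Fin k) => P)
  rw [← h1, Measure.map_map (by fun_prop) (by fun_prop)] at h2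
  simp_rw [Measure.infinitePi_eq_pi] at h2
  exact h2

theorem measureReal_blocks_le (P : Measure ℝ) [IsProbabilityMeasure P] {n q k : ℕ}
    {σ : Fin q × Fin k → Fin n} (hσ : Function.Injective σ) {A : Set (Fin k → ℝ)}
    (hA : MeasurableSet A) {η : ℝ} (hη : 0 ≤ η) :
    (Measure.pi fun _ : Fin n => P).real {x | q * ((Measure.pi fun _ : Fin k => P).real A + η) ≤
      ∑ j : Fin q, A.indicator (fun _ => (1 : ℝ)) (fun i => x (σ (j, i)))} ≤
      Real.exp (-(2 * η ^ 2 * q)) := by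
  set M := Measure.pi fun _ : Fin n => P
  set m := (Measure.pi fun _ : Fin k => P).real A
  have hblock : ∀ j : Fin q, M.map (fun x i => x (σ (j, i))) = Measure.pi fun _ : Fin k => P :=
    fun j => map_pi_comp_injective P fun a b hab => (Prod.ext_iff.1 (hσ hab)).2
  set Y : Fin q → (Fin n → ℝ) → ℝ :=
    fun j x => A.indicator (fun _ => (1 : ℝ)) (fun i => x (σ (j, i)))
  have hAm : Measurable (A.indicator (fun _ => (1 : ℝ))) := measurable_const.indicator hA
  have hYm : ∀ j, Measurable (Y j) := fun j => hAm.comp (by fun_prop)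
  have hY : ∀ j, ∫ x, Y j x ∂M = m := fun j => by
    have := integral_map (μ := M) (φ := fun x (i : Fin k) => x (σ (j, i)))
      (Measurable.aemeasurable (by fun_prop))
      (f := A.indicator (fun _ => (1 : ℝ))) hAm.aestronglyMeasurable
    rw [hblock, integral_indicator hA] at this
    simpa [m] using this.symm
  have hind : ProbabilityTheory.iIndepFun (fun j x => Y j x - m) M :=
    (iIndepFun_blocks P hσ).comp (fun _ y => A.indicator (fun _ => (1 : ℝ)) y - m)
      fun _ => hAm.sub_const _
  have hsub : ∀ j ∈ (Finset.univ : Finset (Fin q)), ProbabilityTheory.HasSubgaussianMGF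
      (fun x => Y j x - m) ((‖(1 : ℝ) - 0‖₊ / 2) ^ 2) M := fun j _ => by
    have := ProbabilityTheory.hasSubgaussianMGF_of_mem_Icc (μ := M) (X := Y j) (a := 0) (b := 1)
      (hYm j).aemeasurable (ae_of_all _ fun x => by
        by_cases hx : (fun i => x (σ (j, i))) ∈ A <;> simp [Y, hx])
    simpa [hY] using this
  have hoef := ProbabilityTheory.HasSubgaussianMGF.measure_sum_ge_le_of_iIndepFun hind hsub
    (ε := q * η) (by positivity)
  refine le_trans (le_of_eq ?_) (hoef.trans (Real.exp_le_exp.2 (le_of_eq ?_)))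
  · congr 1
    ext x
    simp only [Set.mem_ofPred_eq, Finset.sum_sub_distrib, Finset.sum_const, Finset.card_univ,
      Fintype.card_fin, nsmul_eq_mul, Y]
    constructor <;> intro h <;> linarith
  · rcases Nat.eq_zero_or_pos q with rfl | hq
    · simp
    · have : (0 : ℝ) < q := by exact_mod_cast hq
      simp
      field_simp
      try ring

namespace IsOrlicz

variable {V : ℝ → ℝ}

theorem continuous (hV : IsOrlicz V) : Continuous V :=
  continuousOn_univ.1 (hV.1.continuousOn isOpen_univ)

theorem apply_abs (hV : IsOrlicz V) (x : ℝ) : V |x| = V x := by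
  rcases abs_choice x with h | h <;> rw [h]
  exact hV.2.1 x

theorem abs_mul_le (hV : IsOrlicz V) {r x : ℝ} (hr : 0 < r) (hx : r ≤ |x|) :
    |x| * V r ≤ r * V x := by
  have hx0 : 0 < |x| := hr.trans_le hx
  have h := hV.1.2 (Set.mem_univ |x|) (Set.mem_univ 0)
    (show 0 ≤ r / |x| by positivity)
    (show 0 ≤ 1 - r / |x| by rw [sub_nonneg, div_le_one hx0]; exact hx) (by ring)
  simp only [smul_eq_mul, mul_zero, add_zero, hV.2.2.1, hV.apply_abs] at h
  rwa [div_mul_cancel₀ _ hx0.ne', div_mul_eq_mul_div, le_div_iff₀ hx0, mul_comm] at h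

theorem le_of_le_abs (hV : IsOrlicz V) {r x : ℝ} (hr : 0 < r) (hx : r ≤ |x|) : V r ≤ V x := by
  have h := hV.abs_mul_le hr hx
  have := mul_le_mul_of_nonneg_right hx (hV.2.2.2.2 r)
  exact le_of_mul_le_mul_left (this.trans h) hr

end IsOrlicz

theorem integral_gibbs (V f : ℝ → ℝ) (α : ℝ) :
    ∫ x, f x ∂(gibbs V α) = (∫ x, f x * Real.exp (α * V x)) / partitionFn V α := by
  rw [gibbs, integral_tilted, ← integral_div]
  refine integral_congr_ae (ae_of_all _ fun x => ?_)
  simp only [smul_eq_mul, partitionFn]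
  ring

theorem integrable_gibbs {V f : ℝ → ℝ} {α : ℝ} (h : Integrable fun x => Real.exp (α * V x))
    (hf : Integrable fun x => f x * Real.exp (α * V x)) : Integrable f (gibbs V α) := by
  rw [gibbs, integrable_tilted_iff h]
  simpa [mul_comm] using hf

theorem integrable_exp_mul {V₁ V₂ : ℝ → ℝ} (hV₁ : IsOrlicz V₁) (hV₂ : IsOrlicz V₂) {α : ℝ}
    (hα : α < 0) (hint : Integrable fun x : ℝ => V₁ x * Real.exp (α * V₂ x)) :
    Integrable fun x => Real.exp (α * V₂ x) := by
  have h1 : 0 < V₁ 1 := hV₁.2.2.2.1 1 one_ne_zero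
  have hc := hV₂.continuous
  have hind : Integrable ((Set.Icc (-1 : ℝ) 1).indicator fun _ => (1 : ℝ)) :=
    (integrable_indicator_iff measurableSet_Icc).2 (integrableOn_const (by simp))
  refine (hind.add (hint.div_const (V₁ 1))).mono' (by fun_prop) (ae_of_all _ fun x => ?_)
  rw [Real.norm_of_nonneg (Real.exp_pos _).le, Pi.add_apply]
  have hpos : 0 ≤ V₁ x * Real.exp (α * V₂ x) / V₁ 1 :=
    div_nonneg (mul_nonneg (hV₁.2.2.2.2 x) (Real.exp_pos _).le) h1.le
  by_cases hx : x ∈ Set.Icc (-1 : ℝ) 1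
  · rw [Set.indicator_of_mem hx]
    have : Real.exp (α * V₂ x) ≤ 1 :=
      Real.exp_le_one_iff.2 (mul_nonpos_of_nonpos_of_nonneg hα.le (hV₂.2.2.2.2 x))
    linarith
  · rw [Set.indicator_of_notMem hx, zero_add, le_div_iff₀ h1, mul_comm]
    have : V₁ 1 ≤ V₁ x := hV₁.le_of_le_abs one_pos
      (le_of_not_ge fun h => hx (abs_le.1 h))
    gcongr

theorem mem_interior_integrableExpSet {V : ℝ → ℝ}
    (h : ∀ α < 0, Integrable fun x => Real.exp (α * V x)) {α : ℝ} (hα : α < 0) :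
    α ∈ interior (ProbabilityTheory.integrableExpSet V volume) :=
  mem_interior.2 ⟨Set.Iio 0, fun β hβ => h β hβ, isOpen_Iio, hα⟩

theorem integrable_mul_exp {V : ℝ → ℝ} (h : ∀ α < 0, Integrable fun x => Real.exp (α * V x))
    {α : ℝ} (hα : α < 0) : Integrable fun x => V x * Real.exp (α * V x) := by
  simpa using ProbabilityTheory.integrable_pow_mul_exp_of_mem_interior_integrableExpSet
    (mem_interior_integrableExpSet h hα) 1

theorem continuousOn_integral_gibbs {V : ℝ → ℝ}
    (h : ∀ α < 0, Integrable fun x => Real.exp (α * V x)) :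
    ContinuousOn (fun α => ∫ x, V x ∂(gibbs V α)) (Set.Iio 0) := by
  have h1 : ContinuousOn (deriv (ProbabilityTheory.cgf V volume)) (Set.Iio 0) :=
    ProbabilityTheory.analyticOnNhd_cgf.deriv.continuousOn.mono
      fun α hα => mem_interior_integrableExpSet h hα
  refine h1.congr fun α hα => ?_
  rw [integral_gibbs, ProbabilityTheory.deriv_cgf (mem_interior_integrableExpSet h hα)]
  rfl

theorem integral_sub_mul_exp {V : ℝ → ℝ} (h : ∀ α < 0, Integrable fun x => Real.exp (α * V x))
    {α : ℝ} (hα : α < 0) (c : ℝ) :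
    ∫ x, (V x - c) * Real.exp (α * V x) =
      (∫ x, V x ∂(gibbs V α) - c) * partitionFn V α := by
  have hZ := partitionFn_pos (h α hα)
  simp_rw [sub_mul]
  rw [integral_sub (integrable_mul_exp h hα) ((h α hα).const_mul c), integral_const_mul,
    integral_gibbs, div_mul_cancel₀ _ hZ.ne']
  rfl

theorem integral_gibbs_lt {V : ℝ → ℝ} (hV : Continuous V) (hV0 : V 0 = 0)
    (h : ∀ α < 0, Integrable fun x => Real.exp (α * V x)) {α β : ℝ} (hβ : β < α) (hα : α < 0)
    (hpos : 0 < ∫ x, V x ∂(gibbs V α)) :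
    ∫ x, V x ∂(gibbs V β) < ∫ x, V x ∂(gibbs V α) := by
  set R := ∫ x, V x ∂(gibbs V α) with hR
  have hZ := partitionFn_pos (h β (hβ.trans hα))
  have hIα := integral_sub_mul_exp h hα R
  have hIβ := integral_sub_mul_exp h (hβ.trans hα) R
  rw [← hR, sub_self, zero_mul] at hIα
  have hint : ∀ γ < 0, Integrable fun x => (V x - R) * Real.exp (γ * V x) := fun γ hγ => by
    simp_rw [sub_mul]
    exact (integrable_mul_exp h hγ).sub ((h γ hγ).const_mul R)
  set F : ℝ → ℝ := fun x => Real.exp ((β - α) * R) * ((V x - R) * Real.exp (α * V x)) -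
    (V x - R) * Real.exp (β * V x) with hF
  have hFeq : ∀ x, F x = Real.exp (α * V x) *
      ((V x - R) * (Real.exp ((β - α) * R) - Real.exp ((β - α) * V x))) := fun x => by
    have : Real.exp (β * V x) = Real.exp (α * V x) * Real.exp ((β - α) * V x) := by
      rw [← Real.exp_add]; ring_nf
    rw [hF]; simp only [this]; ring
  have hF0 : 0 ≤ F := fun x => by
    rw [Pi.zero_apply, hFeq]
    refine mul_nonneg (Real.exp_pos _).le ?_
    rcases le_total R (V x) with hx | hx
    · refine mul_nonneg (sub_nonneg.2 hx) (sub_nonneg.2 (Real.exp_le_exp.2 ?_))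
      nlinarith
    · refine mul_nonneg_of_nonpos_of_nonpos (sub_nonpos.2 hx)
        (sub_nonpos.2 (Real.exp_le_exp.2 ?_))
      nlinarith
  have hFint : Integrable F := ((hint α hα).const_mul _).sub (hint β (hβ.trans hα))
  have hFpos : 0 < ∫ x, F x := by
    rw [integral_pos_iff_support_of_nonneg hF0 hFint]
    refine IsOpen.measure_pos _ (Continuous.isOpen_support (by fun_prop)) ⟨0, ?_⟩
    rw [Function.mem_support, hFeq, hV0]
    have : Real.exp ((β - α) * R) < 1 := Real.exp_lt_one_iff.2 (by nlinarith)
    have h2 : (0 - R) * (Real.exp ((β - α) * R) - Real.exp ((β - α) * 0)) > 0 := by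
      rw [mul_zero, Real.exp_zero]; nlinarith
    simpa using h2.ne'
  rw [integral_sub ((hint α hα).const_mul _) (hint β (hβ.trans hα)), integral_const_mul, hIα,
    hIβ, mul_zero, zero_sub, ← neg_mul, neg_sub] at hFpos
  exact sub_pos.1 (pos_of_mul_pos_left hFpos hZ.le)

theorem partitionFn_mul_exp_le {V : ℝ → ℝ}
    (h : ∀ α < 0, Integrable fun x => Real.exp (α * V x)) {α β R : ℝ} (hα : α < 0) (hβ : β < 0)
    (hR : ∫ x, V x ∂(gibbs V α) = R) :
    partitionFn V α * Real.exp (-(α * R)) ≤ partitionFn V β * Real.exp (-(β * R)) := by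
  have hint : Integrable fun x => (V x - R) * Real.exp (α * V x) := by
    simp_rw [sub_mul]
    exact (integrable_mul_exp h hα).sub ((h α hα).const_mul R)
  have h0 := integral_sub_mul_exp h hα R
  rw [hR, sub_self, zero_mul] at h0
  have key : ∫ x, Real.exp ((β - α) * R) *
      (Real.exp (α * V x) + (β - α) * ((V x - R) * Real.exp (α * V x))) ≤ partitionFn V β := by
    refine integral_mono (((h α hα).add (hint.const_mul _)).const_mul _) (h β hβ) fun x => ?_
    have h1 := Real.add_one_le_exp ((β - α) * (V x - R))
    have h2 : Real.exp (β * V x) = Real.exp ((β - α) * R) * (Real.exp (α * V x) *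
        Real.exp ((β - α) * (V x - R))) := by
      rw [← Real.exp_add, ← Real.exp_add]; ring_nf
    simp only [h2]
    have h3 := mul_le_mul_of_nonneg_left h1 (Real.exp_pos (α * V x)).le
    refine mul_le_mul_of_nonneg_left ?_ (Real.exp_pos _).le
    linarith
  rw [integral_const_mul, integral_add (h α hα) (hint.const_mul _), integral_const_mul, h0,
    mul_zero, add_zero] at key
  calc partitionFn V α * Real.exp (-(α * R))
      = Real.exp ((β - α) * R) * partitionFn V α * Real.exp (-(β * R)) := by
        rw [mul_comm (Real.exp _), mul_assoc, ← Real.exp_add]; ring_nf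
    _ ≤ _ := by gcongr; exact key

theorem tendsto_integral_gibbs_atBot {V f : ℝ → ℝ} (hV : IsOrlicz V) (hf : Continuous f)
    (hf0 : f 0 = 0) (hfn : ∀ x, 0 ≤ f x)
    (h : ∀ α < 0, Integrable fun x => Real.exp (α * V x))
    (hfi : ∀ α < 0, Integrable fun x => f x * Real.exp (α * V x)) {δ : ℝ} (hδ : 0 < δ) :
    ∀ᶠ α in atBot, ∫ x, f x ∂(gibbs V α) < δ := by
  obtain ⟨r, hr, hrf⟩ : ∃ r > 0, ∀ x, |x| < r → f x < δ / 2 := by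
    have := hf.tendsto 0
    rw [hf0] at this
    obtain ⟨r, hr, H⟩ := Metric.eventually_nhds_iff.1 (this.eventually_lt_const (half_pos hδ))
    exact ⟨r, hr, fun x hx => H (by simpa [Real.dist_eq] using hx)⟩
  have hc : 0 < V r := hV.2.2.2.1 r hr.ne'
  obtain ⟨s, hs, hsV⟩ : ∃ s > 0, ∀ x, |x| < s → V x < V r / 2 := by
    have := hV.continuous.tendsto 0
    rw [hV.2.2.1] at this
    obtain ⟨r, hr, H⟩ := Metric.eventually_nhds_iff.1 (this.eventually_lt_const (half_pos hc))
    exact ⟨r, hr, fun x hx => H (by simpa [Real.dist_eq] using hx)⟩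
  set C := ∫ x, f x * Real.exp (-1 * V x)
  have hlim : Tendsto (fun α : ℝ => Real.exp (V r) * C / (2 * s) * Real.exp (α * (V r / 2)))
      atBot (𝓝 0) := by
    simpa using (Real.tendsto_exp_atBot.comp
      (tendsto_id.atBot_mul_const (half_pos hc))).const_mul (Real.exp (V r) * C / (2 * s))
  filter_upwards [hlim.eventually_lt_const (half_pos hδ), eventually_le_atBot (-1)] with α hα hα1
  have hα0 : α < 0 := by linarith
  have hZ := partitionFn_pos (h α hα0)
  have hnum : ∫ x, f x * Real.exp (α * V x) ≤
      δ / 2 * partitionFn V α + Real.exp ((α + 1) * V r) * C := by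
    rw [partitionFn, ← integral_const_mul, ← integral_const_mul, ← integral_add
      ((h α hα0).const_mul _) ((hfi (-1) (by norm_num)).const_mul _)]
    refine integral_mono (hfi α hα0) (((h α hα0).const_mul _).add
      ((hfi (-1) (by norm_num)).const_mul _)) fun x => ?_
    have e1 := Real.exp_pos (α * V x)
    have e2 : 0 ≤ Real.exp ((α + 1) * V r) * (f x * Real.exp (-1 * V x)) :=
      mul_nonneg (Real.exp_pos _).le (mul_nonneg (hfn x) (Real.exp_pos _).le)
    rcases lt_or_ge |x| r with hx | hx
    · have := mul_le_mul_of_nonneg_right (hrf x hx).le e1.le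
      simp only
      linarith
    · have hVx := hV.le_of_le_abs hr hx
      have : Real.exp (α * V x) ≤ Real.exp ((α + 1) * V r) * Real.exp (-1 * V x) := by
        rw [← Real.exp_add]
        refine Real.exp_le_exp.2 ?_
        nlinarith
      have := mul_le_mul_of_nonneg_left this (hfn x)
      have : 0 ≤ δ / 2 * Real.exp (α * V x) := by positivity
      simp only
      linarith
  have hZlow : 2 * s * Real.exp (α * (V r / 2)) ≤ partitionFn V α := by
    have : ∫ x in Set.Ioo (-s) s, Real.exp (α * (V r / 2)) ≤ partitionFn V α := by
      refine (setIntegral_mono_on (integrableOn_const (by simp)) (h α hα0).integrableOn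
        measurableSet_Ioo fun x hx => ?_).trans
        (setIntegral_le_integral (h α hα0) (ae_of_all _ fun x => (Real.exp_pos _).le))
      refine Real.exp_le_exp.2 (mul_le_mul_of_nonpos_left ?_ hα0.le)
      exact (hsV x (abs_lt.2 hx)).le
    refine le_trans (le_of_eq ?_) this
    rw [setIntegral_const, Real.volume_real_Ioo_of_le (by linarith), smul_eq_mul]
    ring
  have hC : 0 ≤ C := integral_nonneg fun x => mul_nonneg (hfn x) (Real.exp_pos _).le
  rw [integral_gibbs]
  calc (∫ x, f x * Real.exp (α * V x)) / partitionFn V α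
      ≤ (δ / 2 * partitionFn V α + Real.exp ((α + 1) * V r) * C) / partitionFn V α := by gcongr
    _ = δ / 2 + Real.exp ((α + 1) * V r) * C / partitionFn V α := by field_simp
    _ ≤ δ / 2 + Real.exp ((α + 1) * V r) * C / (2 * s * Real.exp (α * (V r / 2))) := by
        gcongr
    _ = δ / 2 + Real.exp (V r) * C / (2 * s) * Real.exp (α * (V r / 2)) := by
        have : Real.exp ((α + 1) * V r) =
            Real.exp (V r) * Real.exp (α * (V r / 2)) * Real.exp (α * (V r / 2)) := by
          rw [← Real.exp_add, ← Real.exp_add]; ring_nf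
        rw [this]
        field_simp
    _ < δ := by linarith

theorem exists_gibbs_params {V₁ V₂ : ℝ → ℝ} (hV₁ : IsOrlicz V₁) (hV₂ : IsOrlicz V₂)
    (hint : ∀ α : ℝ, α < 0 → Integrable (fun x : ℝ => V₁ x * Real.exp (α * V₂ x))) :
    ∃ Rb : ℝ, 0 < Rb ∧ ∀ R : ℝ, 0 < R → R ≤ Rb →
      ∃ α < 0, ∫ x, V₂ x ∂(gibbs V₂ α) = R ∧ ∀ ε > 0, ∃ β < α, α - 1 < β ∧
        R - ε < ∫ x, V₂ x ∂(gibbs V₂ β) ∧ ∫ x, V₂ x ∂(gibbs V₂ β) < R ∧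
        ∫ x, V₁ x ∂(gibbs V₂ β) < 1 := by
  have hexp : ∀ α < 0, Integrable fun x => Real.exp (α * V₂ x) :=
    fun α hα => integrable_exp_mul hV₁ hV₂ hα (hint α hα)
  have hcont := continuousOn_integral_gibbs hexp
  obtain ⟨α₀, hα₀⟩ := (eventually_atBot.1 (tendsto_integral_gibbs_atBot hV₂ hV₁.continuous
    hV₁.2.2.1 hV₁.2.2.2.2 hexp hint one_pos))
  set a := min α₀ (-1) with ha
  have ha0 : a < 0 := (min_le_right _ _).trans_lt (by norm_num)
  refine ⟨∫ x, V₂ x ∂(gibbs V₂ a), ?_, fun R hR hRb => ?_⟩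
  · rw [integral_gibbs]
    refine div_pos ?_ (partitionFn_pos (hexp a ha0))
    rw [integral_pos_iff_support_of_nonneg
      (fun x => mul_nonneg (hV₂.2.2.2.2 x) (Real.exp_pos _).le) (integrable_mul_exp hexp ha0)]
    have hc := hV₂.continuous
    have hc' : Continuous fun x => V₂ x * Real.exp (a * V₂ x) :=
      hc.mul (Real.continuous_exp.comp (continuous_const.mul hc))
    refine IsOpen.measure_pos _ hc'.isOpen_support ⟨1, ?_⟩
    exact mul_ne_zero (hV₂.2.2.2.1 1 one_ne_zero).ne' (Real.exp_pos _).ne'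
  · obtain ⟨b, hb, hba⟩ := ((tendsto_integral_gibbs_atBot hV₂ hV₂.continuous hV₂.2.2.1
      hV₂.2.2.2.2 hexp (fun α hα => integrable_mul_exp hexp hα) hR).and
      (eventually_le_atBot a)).exists
    obtain ⟨α, ⟨-, hαa⟩, hα⟩ := intermediate_value_Icc hba
      (hcont.mono fun x hx => hx.2.trans_lt ha0) ⟨hb.le, hRb⟩
    have hα0 := hαa.trans_lt ha0
    refine ⟨α, hα0, hα, fun ε hε => ?_⟩
    have hcα := (hcont α hα0).continuousAt (Iio_mem_nhds hα0)
    have hev : ∀ᶠ β in 𝓝[<] α, R - ε < ∫ x, V₂ x ∂(gibbs V₂ β) :=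
      nhdsWithin_le_nhds (hcα.eventually_const_lt (by simp only [hα]; linarith))
    obtain ⟨β, ⟨hβ1, hβ2⟩, hβα⟩ := ((hev.and (nhdsWithin_le_nhds
      (eventually_gt_nhds (sub_one_lt α)))).and self_mem_nhdsWithin).exists
    refine ⟨β, hβα, hβ2, hβ1, ?_, hα₀ β ?_⟩
    · have := integral_gibbs_lt hV₂.continuous hV₂.2.2.1 hexp hβα hα0 (by
        simp only at hα; rw [hα]; exact hR)
      simp only at hα
      rwa [hα] at this
    · exact (le_of_lt hβα).trans (hαa.trans (min_le_left _ _))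

theorem IsOrlicz.measurableSet_orliczBall {V : ℝ → ℝ} (hV : IsOrlicz V) (R : ℝ) (n : ℕ) :
    MeasurableSet (OrliczBall V R n) := by
  have := hV.continuous.measurable
  exact measurableSet_le (by fun_prop) measurable_const

theorem IsOrlicz.volume_orliczBall_ne_top {V : ℝ → ℝ} (hV : IsOrlicz V) (R : ℝ) (n : ℕ) :
    volume (OrliczBall V R n) ≠ ∞ := by
  have h1 : 0 < V 1 := hV.2.2.2.1 1 one_ne_zero
  refine ne_top_of_le_ne_top (measure_closedBall_lt_top (μ := volume) (x := (0 : Fin n → ℝ))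
    (r := max 1 (R * n / V 1))).ne (measure_mono fun x hx => ?_)
  rw [mem_closedBall_zero_iff, pi_norm_le_iff_of_nonneg (zero_le_one.trans (le_max_left _ _))]
  intro i
  rw [Real.norm_eq_abs]
  rcases le_total |x i| 1 with h | h
  · exact h.trans (le_max_left _ _)
  · refine le_trans ?_ (le_max_right _ _)
    rw [le_div_iff₀ h1]
    have hi : V (x i) ≤ ∑ j, V (x j) :=
      Finset.single_le_sum (fun j _ => hV.2.2.2.2 (x j)) (Finset.mem_univ i)
    have := hV.abs_mul_le one_pos h
    have hx' : ∑ j, V (x j) ≤ R * n := hx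
    linarith

theorem orliczBall_comp_perm (V : ℝ → ℝ) (R : ℝ) {n : ℕ} (e : Equiv.Perm (Fin n))
    (x : Fin n → ℝ) : x ∘ e ∈ OrliczBall V R n ↔ x ∈ OrliczBall V R n := by
  simp only [OrliczBall, Set.mem_ofPred_eq, Function.comp_apply]
  rw [Equiv.sum_comp e fun i => V (x i)]

theorem eventually_le_volume_inter {V₁ V₂ : ℝ → ℝ} (hV₁ : Measurable V₁) (hV₂ : Measurable V₂)
    (hexp : ∀ α < 0, Integrable fun x => Real.exp (α * V₂ x))
    (hint : ∀ α : ℝ, α < 0 → Integrable (fun x : ℝ => V₁ x * Real.exp (α * V₂ x)))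
    {α R : ℝ} (hα : α < 0) (hR : ∫ x, V₂ x ∂(gibbs V₂ α) = R)
    (hβ : ∀ ε > 0, ∃ β < α, α - 1 < β ∧
        R - ε < ∫ x, V₂ x ∂(gibbs V₂ β) ∧ ∫ x, V₂ x ∂(gibbs V₂ β) < R ∧
        ∫ x, V₁ x ∂(gibbs V₂ β) < 1) {κ : ℝ} (hκ : 0 < κ) :
    ∀ᶠ n : ℕ in atTop,
      ENNReal.ofReal (1 / 2 * (partitionFn V₂ α ^ n * Real.exp (-(α * (R * n)) - κ * n))) ≤
        volume (OrliczBall V₁ 1 n ∩ OrliczBall V₂ R n) := by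
  have hα1 : 0 < 1 - α := by linarith
  obtain ⟨β, hβα, hαβ, hm1, hm2, hm3⟩ := hβ (κ / (1 - α)) (by positivity)
  set ε := κ / (1 - α) with hε
  have hε0 : 0 < ε := by positivity
  have hβ0 : β < 0 := hβα.trans hα
  have hP := isProbabilityMeasure_gibbs (hexp β hβ0)
  have hi1 := integrable_gibbs (hexp β hβ0) (hint β hβ0)
  have hi2 := integrable_gibbs (hexp β hβ0) (integrable_mul_exp hexp hβ0)
  have t1 := tendsto_pi_measure_lt_sum (gibbs V₂ β) hV₁ hi1 hm3
  have t2 := tendsto_pi_measure_lt_sum (gibbs V₂ β) hV₂ hi2 hm2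
  have t3 := tendsto_pi_measure_lt_sum (gibbs V₂ β) hV₂.neg hi2.neg (c := -(R - ε)) (by
    simp only [Pi.neg_apply]
    rw [integral_neg]; linarith)
  have t := (t1.add t2).add t3
  simp only [add_zero] at t
  filter_upwards [t.eventually_lt_const (show (0 : ℝ≥0∞) < 1 / 2 by norm_num)] with n hn
  set M := Measure.pi fun _ : Fin n => gibbs V₂ β
  set S : Set (Fin n → ℝ) := (OrliczBall V₁ 1 n ∩ OrliczBall V₂ R n) ∩
    {x | (R - ε) * n ≤ ∑ i, V₂ (x i)} with hS
  have hSm : MeasurableSet S :=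
    ((measurableSet_le (by fun_prop) measurable_const).inter
      (measurableSet_le (by fun_prop) measurable_const)).inter
      (measurableSet_le measurable_const (by fun_prop))
  have hScompl : M Sᶜ ≤ 1 / 2 := by
    refine le_trans (measure_mono ?_) (((measure_union_le _ _).trans
      (add_le_add (measure_union_le _ _) le_rfl)).trans hn.le)
    intro x hx
    by_contra hx'
    simp only [Set.mem_union, Set.mem_ofPred_eq, not_or, not_lt, Pi.neg_apply,
      Finset.sum_neg_distrib] at hx'
    exact hx ⟨⟨hx'.1.1, hx'.1.2⟩, by simp only [Set.mem_ofPred_eq]; linarith⟩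
  have hShalf : ENNReal.ofReal (1 / 2) ≤ M S := by
    have h1 : (1 : ℝ≥0∞) ≤ M S + 1 / 2 :=
      calc (1 : ℝ≥0∞) = M (S ∪ Sᶜ) := by rw [Set.union_compl_self, measure_univ]
        _ ≤ M S + 1 / 2 := (measure_union_le _ _).trans (add_le_add le_rfl hScompl)
    have h2 : ENNReal.ofReal (1 / 2) = 1 / 2 := by
      rw [ENNReal.ofReal_div_of_pos (by norm_num)]; simp
    rw [h2]
    have h3 : (1 : ℝ≥0∞) - 1 / 2 = 1 / 2 := by simp
    rw [← h3]
    exact tsub_le_iff_right.2 h1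
  refine le_trans ?_ (measure_mono (Set.inter_subset_left (s := OrliczBall V₁ 1 n ∩ OrliczBall V₂ R n)
    (t := {x | (R - ε) * n ≤ ∑ i, V₂ (x i)})))
  refine le_trans ?_ (gibbs_le_volume hV₂ hβ0.le (hexp β hβ0) hSm (c := (R - ε) * n)
    fun x hx => hx.2)
  refine le_trans ?_ (mul_le_mul_right hShalf _)
  rw [← ENNReal.ofReal_mul (mul_nonneg (pow_nonneg (partitionFn_pos (hexp β hβ0)).le _)
    (Real.exp_pos _).le), mul_comm (1 / 2 : ℝ)]
  refine ENNReal.ofReal_le_ofReal (mul_le_mul_of_nonneg_right ?_ (by norm_num))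
  have hZ := partitionFn_pos (hexp α hα)
  have hpow := pow_le_pow_left₀ (by positivity) (partitionFn_mul_exp_le hexp hα hβ0 hR) n
  rw [mul_pow, mul_pow, ← Real.exp_nat_mul, ← Real.exp_nat_mul] at hpow
  have hβε : -(κ * n) ≤ β * ε * n := by
    have : -κ ≤ β * ε := by
      have : κ = (1 - α) * ε := by rw [hε]; field_simp
      nlinarith
    nlinarith [(Nat.cast_nonneg n : (0 : ℝ) ≤ n)]
  calc partitionFn V₂ α ^ n * Real.exp (-(α * (R * n)) - κ * n)
      = partitionFn V₂ α ^ n * Real.exp (n * -(α * R)) * Real.exp (-(κ * n)) := by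
        rw [mul_assoc, ← Real.exp_add]; ring_nf
    _ ≤ partitionFn V₂ β ^ n * Real.exp (n * -(β * R)) * Real.exp (β * ε * n) :=
        mul_le_mul hpow (Real.exp_le_exp.2 hβε) (Real.exp_pos _).le
          (mul_nonneg (pow_nonneg (partitionFn_pos (hexp β hβ0)).le _) (Real.exp_pos _).le)
    _ = partitionFn V₂ β ^ n * Real.exp (-(β * ((R - ε) * n))) := by
        rw [mul_assoc, ← Real.exp_add]; ring_nf

theorem cond_real_le_gibbs {V : ℝ → ℝ} (hV : Measurable V) {α : ℝ} (hα : α ≤ 0)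
    (h : Integrable fun x => Real.exp (α * V x)) {n : ℕ} {R ε κ : ℝ} {K E : Set (Fin n → ℝ)}
    (hK : MeasurableSet K) (hE : MeasurableSet E) (hKR : K ⊆ OrliczBall V (R + ε) n)
    (hvol : ENNReal.ofReal (1 / 2 * (partitionFn V α ^ n *
      Real.exp (-(α * (R * n)) - κ * n))) ≤ volume K) :
    IsProbabilityMeasure (ProbabilityTheory.cond volume K) ∧
    (ProbabilityTheory.cond volume K).real E ≤
      2 * Real.exp ((-α * ε + κ) * n) * (Measure.pi fun _ : Fin n => gibbs V α).real E := by
  have := isProbabilityMeasure_gibbs h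
  have hZ := partitionFn_pos h
  have hpos : 0 < 1 / 2 * (partitionFn V α ^ n * Real.exp (-(α * (R * n)) - κ * n)) := by
    positivity
  have hle : ∀ F : Set (Fin n → ℝ), MeasurableSet F → F ⊆ K → volume F ≤
      ENNReal.ofReal (partitionFn V α ^ n * Real.exp (-(α * ((R + ε) * n)))) *
      (Measure.pi fun _ : Fin n => gibbs V α) F := fun F hF hFK =>
    volume_le_gibbs hV hα h hF fun x hx => hKR (hFK hx)
  have htop : volume K ≠ ∞ := ne_top_of_le_ne_top
    (ENNReal.mul_ne_top ENNReal.ofReal_ne_top (measure_ne_top _ _)) (hle K hK subset_rfl)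
  have h0 : volume K ≠ 0 := ((ENNReal.ofReal_pos.2 hpos).trans_le hvol).ne'
  refine ⟨ProbabilityTheory.cond_isProbabilityMeasure_of_finite h0 htop, ?_⟩
  have hKE := ENNReal.toReal_mono (ENNReal.mul_ne_top ENNReal.ofReal_ne_top (measure_ne_top _ _))
    ((hle (K ∩ E) (hK.inter hE) Set.inter_subset_left).trans
      (mul_le_mul_right (measure_mono Set.inter_subset_right) _))
  rw [ENNReal.toReal_mul, ENNReal.toReal_ofReal (by positivity)] at hKE
  have hvol' : 1 / 2 * (partitionFn V α ^ n * Real.exp (-(α * (R * n)) - κ * n)) ≤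
      (volume K).toReal := (ENNReal.ofReal_le_iff_le_toReal htop).1 hvol
  rw [measureReal_def, ProbabilityTheory.cond_apply hK, ENNReal.toReal_mul, ENNReal.toReal_inv,
    inv_mul_le_iff₀ (hpos.trans_le hvol')]
  refine hKE.trans ?_
  rw [← mul_assoc (volume K).toReal]
  refine mul_le_mul_of_nonneg_right ?_ measureReal_nonneg
  refine le_trans (le_of_eq ?_) (mul_le_mul_of_nonneg_right hvol' (by positivity))
  rw [show -(α * ((R + ε) * n)) = (-(α * (R * n)) - κ * n) + (-α * ε + κ) * n by ring,
    Real.exp_add]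
  ring

theorem cond_real_comp_eq {n k : ℕ} {K : Set (Fin n → ℝ)} (hK : MeasurableSet K)
    (hinv : ∀ (e : Equiv.Perm (Fin n)) (x : Fin n → ℝ), x ∘ e ∈ K ↔ x ∈ K)
    {f g : Fin k → Fin n} (hf : Function.Injective f) (hg : Function.Injective g)
    {A : Set (Fin k → ℝ)} (hA : MeasurableSet A) :
    (ProbabilityTheory.cond volume K).real {x | (fun i => x (f i)) ∈ A} =
      (ProbabilityTheory.cond volume K).real {x | (fun i => x (g i)) ∈ A} := by
  obtain ⟨e, he⟩ := (Equiv.Perm.isMultiplyPretransitive (Fin n) k).exists_smul_eq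
    (⟨g, hg⟩ : Fin k ↪ Fin n) ⟨f, hf⟩
  have he' : ∀ i, e (g i) = f i := fun i => DFunLike.congr_fun he i
  have hmp : MeasurePreserving (fun (x : Fin n → ℝ) => x ∘ e) volume volume := by
    have := volume_measurePreserving_piCongrLeft (fun _ : Fin n => ℝ) e.symm
    convert! this using 1
    ext x i
    have := MeasurableEquiv.piCongrLeft_apply_apply (β := fun _ : Fin n => ℝ) e.symm x (e i)
    simpa using this.symm
  have hmeas : ∀ u : Fin k → Fin n, MeasurableSet {x : Fin n → ℝ | (fun i => x (u i)) ∈ A} :=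
    fun u => (show Measurable fun (x : Fin n → ℝ) i => x (u i) by fun_prop) hA
  rw [measureReal_def, measureReal_def, ProbabilityTheory.cond_apply hK,
    ProbabilityTheory.cond_apply hK,
    ← hmp.measure_preimage (hK.inter (hmeas g)).nullMeasurableSet]
  congr 3
  ext x
  simp only [Set.mem_inter_iff, Set.mem_preimage, hinv, Set.mem_ofPred_eq, Function.comp_apply, he']

theorem cond_real_first_le {n q k : ℕ} {K : Set (Fin n → ℝ)} (hK : MeasurableSet K)
    [IsProbabilityMeasure (ProbabilityTheory.cond volume K)]
    (hinv : ∀ (e : Equiv.Perm (Fin n)) (x : Fin n → ℝ), x ∘ e ∈ K ↔ x ∈ K) (hq : 0 < q)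
    {σ : Fin q × Fin k → Fin n} (hσ : Function.Injective σ)
    {g : Fin k → Fin n} (hg : Function.Injective g)
    {A : Set (Fin k → ℝ)} (hA : MeasurableSet A) {m : ℝ} (hm : 0 ≤ m) :
    (ProbabilityTheory.cond volume K).real {x | (fun i => x (g i)) ∈ A} ≤
      m + (ProbabilityTheory.cond volume K).real {x | q * m ≤
      ∑ j : Fin q, A.indicator (fun _ => (1 : ℝ)) (fun i => x (σ (j, i)))} := by
  set U := ProbabilityTheory.cond volume K with hU
  set E : Set (Fin n → ℝ) := {x | q * m ≤
      ∑ j : Fin q, A.indicator (fun _ => (1 : ℝ)) (fun i => x (σ (j, i)))} with hE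
  have hq' : (0 : ℝ) < q := by exact_mod_cast hq
  have hAm : Measurable (A.indicator (fun _ => (1 : ℝ))) := measurable_const.indicator hA
  have hYm : ∀ j, Measurable fun x : Fin n → ℝ =>
      A.indicator (fun _ => (1 : ℝ)) (fun i => x (σ (j, i))) := fun j => hAm.comp (by fun_prop)
  have hEm : MeasurableSet E := measurableSet_le measurable_const (by fun_prop)
  have hY1 : ∀ (j : Fin q) (x : Fin n → ℝ),
      A.indicator (fun _ => (1 : ℝ)) (fun i => x (σ (j, i))) ≤ 1 := fun j x =>
    Set.indicator_le_self' (fun _ _ => zero_le_one) _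
  have hYint : ∀ j : Fin q, Integrable (fun x : Fin n → ℝ =>
      A.indicator (fun _ => (1 : ℝ)) (fun i => x (σ (j, i)))) U := fun j =>
    Integrable.of_mem_Icc 0 1 (hYm j).aemeasurable (ae_of_all _ fun x =>
      ⟨Set.indicator_nonneg (fun _ _ => zero_le_one) _, hY1 j x⟩)
  have hYval : ∀ j : Fin q, ∫ x, A.indicator (fun _ => (1 : ℝ)) (fun i => x (σ (j, i))) ∂U =
      U.real {x | (fun i => x (g i)) ∈ A} := fun j => by
    have hj : Function.Injective fun i => σ (j, i) := fun a b hab => (Prod.ext_iff.1 (hσ hab)).2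
    rw [hU, ← cond_real_comp_eq hK hinv hj hg hA, ← integral_indicator_one]
    · rfl
    · exact (show Measurable fun (x : Fin n → ℝ) i => x (σ (j, i)) by fun_prop) hA
  have hsum : ∫ x, ∑ j : Fin q, A.indicator (fun _ => (1 : ℝ)) (fun i => x (σ (j, i))) ∂U =
      q * U.real {x | (fun i => x (g i)) ∈ A} := by
    rw [integral_finsetSum _ fun j _ => hYint j]
    simp [hYval]
  have hbound : ∫ x, ∑ j : Fin q, A.indicator (fun _ => (1 : ℝ)) (fun i => x (σ (j, i))) ∂U ≤
      ∫ x, (q * m + E.indicator (fun _ => (q : ℝ)) x) ∂U := by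
    refine integral_mono (integrable_finsetSum _ fun j _ => hYint j)
      ((integrable_const _).add ((integrable_const _).indicator hEm)) fun x => ?_
    by_cases hx : x ∈ E
    · simp only [Set.indicator_of_mem hx]
      have : ∑ j : Fin q, A.indicator (fun _ => (1 : ℝ)) (fun i => x (σ (j, i))) ≤ q :=
        (Finset.sum_le_sum fun j _ => hY1 j x).trans (by simp)
      have : 0 ≤ q * m := by positivity
      linarith
    · simp only [Set.indicator_of_notMem hx, add_zero]
      exact (not_le.1 hx).le
  rw [hsum, integral_add (integrable_const _) ((integrable_const _).indicator hEm),
    integral_indicator hEm] at hbound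
  simp only [integral_const, probReal_univ, measureReal_restrict_apply_univ,
    smul_eq_mul, one_mul] at hbound
  rw [mul_comm (U.real E), ← mul_add] at hbound
  exact le_of_mul_le_mul_left hbound hq'

theorem exists_eventually_cond_first_le {V₁ V₂ : ℝ → ℝ} (hV₁ : Measurable V₁)
    (hV₂ : Measurable V₂) (hexp : ∀ α < 0, Integrable fun x => Real.exp (α * V₂ x))
    (hint : ∀ α : ℝ, α < 0 → Integrable (fun x : ℝ => V₁ x * Real.exp (α * V₂ x)))
    {α R : ℝ} (hα : α < 0) (hR : ∫ x, V₂ x ∂(gibbs V₂ α) = R)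
    (hβ : ∀ ε > 0, ∃ β < α, α - 1 < β ∧
        R - ε < ∫ x, V₂ x ∂(gibbs V₂ β) ∧ ∫ x, V₂ x ∂(gibbs V₂ β) < R ∧
        ∫ x, V₁ x ∂(gibbs V₂ β) < 1) (k : ℕ) {η : ℝ} (hη : 0 < η) :
    ∃ ε > 0, ∀ᶠ n : ℕ in atTop, ∀ K : Set (Fin n → ℝ), MeasurableSet K →
      (∀ (e : Equiv.Perm (Fin n)) (x : Fin n → ℝ), x ∘ e ∈ K ↔ x ∈ K) →
      OrliczBall V₁ 1 n ∩ OrliczBall V₂ R n ⊆ K → K ⊆ OrliczBall V₂ (R + ε) n →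
      IsProbabilityMeasure (ProbabilityTheory.cond volume K) ∧
      ∀ A : Set (Fin k → ℝ), MeasurableSet A →
        (ProbabilityTheory.cond volume K).real (proj k n ⁻¹' A) ≤
          (Measure.pi fun _ : Fin k => gibbs V₂ α).real A + η := by
  set c : ℝ := (η / 2) ^ 2 / (k + 1) with hc
  have hc0 : 0 < c := by positivity
  have := isProbabilityMeasure_gibbs (hexp α hα)
  have hlim : Tendsto (fun n : ℕ => 2 * Real.exp (2 * (η / 2) ^ 2 - c * n)) atTop (𝓝 0) := by
    have : Tendsto (fun n : ℕ => 2 * (η / 2) ^ 2 - c * n) atTop atBot :=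
      tendsto_atBot_add_const_left _ _ (tendsto_neg_atTop_atBot.comp
        (tendsto_natCast_atTop_atTop.const_mul_atTop hc0))
    simpa using (Real.tendsto_exp_atBot.comp this).const_mul 2
  refine ⟨c / 2 / -α, div_pos (half_pos hc0) (neg_pos.2 hα), ?_⟩
  filter_upwards [eventually_le_volume_inter hV₁ hV₂ hexp hint hα hR hβ (half_pos hc0),
    hlim.eventually_lt_const (half_pos hη), eventually_ge_atTop (k + 1)] with n hvol hsmall hn
    K hK hinv hsub hsup
  have hvolK := hvol.trans (measure_mono hsub)
  have hprob := (cond_real_le_gibbs hV₂ hα.le (hexp α hα) hK MeasurableSet.univ hsup hvolK).1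
  refine ⟨hprob, fun A hA => ?_⟩
  set q := n / (k + 1) with hqdef
  have hq : 0 < q := Nat.div_pos hn (Nat.succ_pos k)
  have hqn : q * (k + 1) ≤ n := Nat.div_mul_le_self n (k + 1)
  have hσlt : ∀ p : Fin q × Fin k, (p.1 : ℕ) * (k + 1) + p.2 < n := fun p => by
    have h1 : ((p.1 : ℕ) + 1) * (k + 1) ≤ q * (k + 1) := Nat.mul_le_mul_right _ p.1.2
    have h2 := p.2.2
    rw [add_mul] at h1
    omega
  set σ : Fin q × Fin k → Fin n := fun p => ⟨(p.1 : ℕ) * (k + 1) + p.2, hσlt p⟩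
  have hσ : Function.Injective σ := fun a b hab => by
    have hab' : (a.1 : ℕ) * (k + 1) + a.2 = (b.1 : ℕ) * (k + 1) + b.2 := congrArg Fin.val hab
    have ha := a.2.2
    have hb := b.2.2
    have hmod := congrArg (· % (k + 1)) hab'
    simp only [Nat.mul_add_mod_self_right] at hmod
    rw [Nat.mod_eq_of_lt (by omega), Nat.mod_eq_of_lt (by omega)] at hmod
    have hfst : (a.1 : ℕ) * (k + 1) = b.1 * (k + 1) := by omega
    exact Prod.ext (Fin.ext (Nat.eq_of_mul_eq_mul_right (Nat.succ_pos k) hfst)) (Fin.ext hmod)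
  have hkn : k ≤ n := by omega
  have hpre : proj k n ⁻¹' A = {x | (fun i => x (Fin.castLE hkn i)) ∈ A} := by
    ext x
    have : proj k n x = fun i => x (Fin.castLE hkn i) := by
      funext i
      have : (i : ℕ) < n := i.2.trans_le hkn
      simp [proj, this, Fin.castLE]
    rw [Set.mem_preimage, this, Set.mem_ofPred_eq]
  set m := (Measure.pi fun _ : Fin k => gibbs V₂ α).real A
  have hm : 0 ≤ m := measureReal_nonneg
  have h1 := cond_real_first_le hK hinv hq hσ (Fin.castLE_injective hkn) hA
    (m := m + η / 2) (by positivity)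
  have hAm : Measurable (A.indicator (fun _ => (1 : ℝ))) := measurable_const.indicator hA
  have hYm : ∀ j, Measurable fun x : Fin n → ℝ =>
      A.indicator (fun _ => (1 : ℝ)) (fun i => x (σ (j, i))) := fun j => hAm.comp (by fun_prop)
  have h2 := (cond_real_le_gibbs hV₂ hα.le (hexp α hα) hK (E := {x | q * (m + η / 2) ≤
      ∑ j : Fin q, A.indicator (fun _ => (1 : ℝ)) (fun i => x (σ (j, i)))})
      (measurableSet_le measurable_const (by fun_prop)) hsup hvolK).2
  have h3 := measureReal_blocks_le (gibbs V₂ α) hσ hA (half_pos hη).le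
  have h4 := h2.trans (mul_le_mul_of_nonneg_left h3 (by positivity))
  have hqreal : (n : ℝ) / (k + 1) - 1 ≤ q := by
    have : n < (q + 1) * (k + 1) := by
      have := Nat.lt_div_mul_add (a := n) (Nat.succ_pos k)
      rw [add_mul, one_mul]
      exact this
    have h' : (n : ℝ) < (q + 1) * (k + 1) := by exact_mod_cast this
    rw [sub_le_iff_le_add, div_le_iff₀ (by positivity)]
    exact h'.le
  have h5 : 2 * Real.exp ((-α * (c / 2 / -α) + c / 2) * n) *
      Real.exp (-(2 * (η / 2) ^ 2 * q)) ≤ 2 * Real.exp (2 * (η / 2) ^ 2 - c * n) := by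
    rw [mul_assoc, ← Real.exp_add]
    refine mul_le_mul_of_nonneg_left (Real.exp_le_exp.2 ?_) zero_le_two
    rw [mul_div_cancel₀ _ (neg_pos.2 hα).ne', add_halves]
    have h6 := mul_le_mul_of_nonneg_left hqreal (show 0 ≤ 2 * (η / 2) ^ 2 by positivity)
    have h7 : 2 * (η / 2) ^ 2 * ((n : ℝ) / (k + 1) - 1) = 2 * (c * n) - 2 * (η / 2) ^ 2 := by
      rw [hc]; field_simp
    linarith
  rw [hpre]
  linarith

theorem levyProkhorovEDist_le_of_real_le {Ω : Type*} [PseudoEMetricSpace Ω] [MeasurableSpace Ω]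
    (μ ν ρ : Measure Ω) [IsProbabilityMeasure μ] [IsProbabilityMeasure ν] [IsProbabilityMeasure ρ]
    {η : ℝ} (hη : 0 ≤ η) (hμ : ∀ A, MeasurableSet A → μ.real A ≤ ρ.real A + η)
    (hν : ∀ A, MeasurableSet A → ν.real A ≤ ρ.real A + η) :
    levyProkhorovEDist μ ν ≤ ENNReal.ofReal (2 * η) := by
  have key : ∀ μ ν : Measure Ω, IsProbabilityMeasure μ → IsProbabilityMeasure ν →
      (∀ A, MeasurableSet A → μ.real A ≤ ρ.real A + η) →
      (∀ A, MeasurableSet A → ν.real A ≤ ρ.real A + η) → ∀ (ε : ℝ≥0∞) (B : Set Ω),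
      ENNReal.ofReal (2 * η) < ε → ε < ∞ → MeasurableSet B →
      μ B ≤ ν (Metric.thickening ε.toReal B) + ε := by
    intro μ ν _ _ hμ hν ε B hε hε' hB
    have h1 := hμ B hB
    have h2 := hν Bᶜ hB.compl
    rw [probReal_compl_eq_one_sub hB, probReal_compl_eq_one_sub hB] at h2
    have h3 : μ.real B ≤ ν.real B + 2 * η := by linarith
    calc μ B = ENNReal.ofReal (μ.real B) := by simp
      _ ≤ ENNReal.ofReal (ν.real B + 2 * η) := ENNReal.ofReal_le_ofReal h3
      _ = ν B + ENNReal.ofReal (2 * η) := by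
        rw [ENNReal.ofReal_add measureReal_nonneg (by positivity)]; simp
      _ ≤ _ := add_le_add (measure_mono (Metric.self_subset_thickening
        (ENNReal.toReal_pos (pos_of_gt hε).ne' hε'.ne) B)) hε.le
  exact levyProkhorovEDist_le_of_forall _ _ _ fun ε B h1 h2 h3 =>
    ⟨key μ ν ‹_› ‹_› hμ hν ε B h1 h2 h3, key ν μ ‹_› ‹_› hν hμ ε B h1 h2 h3⟩

theorem measurable_proj (k n : ℕ) : Measurable (proj k n) := by
  refine measurable_pi_iff.2 fun i => ?_
  by_cases h : (i : ℕ) < n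
  · simpa [proj, h] using measurable_pi_apply _
  · simp [proj, h]

/-- Conditional limit theorem: there is `R̄ > 0` such that for every `0 < R ≤ R̄` and
every `k`, the law of the first `k` coordinates of a uniform random point on
`B₁^{n,V₁}` conditioned on lying in `B_{R+ε}^{n,V₂}` merges weakly (as `n → ∞`
followed by `ε → 0`, in the Lévy–Prokhorov metric) with the law of the first `k`
coordinates of a uniform random point on `B_R^{n,V₂}`. -/
theorem stmt18 (V₁ V₂ : ℝ → ℝ) (hV₁ : IsOrlicz V₁) (hV₂ : IsOrlicz V₂)
    (hgrow : Tendsto (fun x : ℝ => V₁ x / V₂ x) (atTop ⊔ atBot) atTop)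
    (hint : ∀ α : ℝ, α < 0 → Integrable (fun x : ℝ => V₁ x * Real.exp (α * V₂ x))) :
    ∃ Rb : ℝ, 0 < Rb ∧ ∀ R : ℝ, 0 < R → R ≤ Rb → ∀ k : ℕ,
      ∀ δ : ℝ, 0 < δ → ∃ ε₀ : ℝ, 0 < ε₀ ∧ ∀ ε : ℝ, 0 < ε → ε ≤ ε₀ →
        ∃ N : ℕ, ∀ n : ℕ, N ≤ n →
          levyProkhorovDist
            (Measure.map (proj k n)
              (ProbabilityTheory.cond (unifBall V₁ 1 n) (OrliczBall V₂ (R + ε) n)))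
            (Measure.map (proj k n) (unifBall V₂ R n)) < δ := by
  have hexp : ∀ α < 0, Integrable fun x => Real.exp (α * V₂ x) :=
    fun α hα => integrable_exp_mul hV₁ hV₂ hα (hint α hα)
  obtain ⟨Rb, hRb, H⟩ := exists_gibbs_params hV₁ hV₂ hint
  refine ⟨Rb, hRb, fun R hR hRRb k δ hδ => ?_⟩
  obtain ⟨α, hα, hmean, hβ⟩ := H R hR hRRb
  obtain ⟨ε₀, hε₀, hev⟩ := exists_eventually_cond_first_le hV₁.continuous.measurable
    hV₂.continuous.measurable hexp hint hα hmean hβ k (show 0 < δ / 4 by positivity)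
  refine ⟨ε₀, hε₀, fun ε hε hεε₀ => ?_⟩
  obtain ⟨N, hN⟩ := eventually_atTop.1 hev
  refine ⟨N, fun n hn => ?_⟩
  have hmono : ∀ {a b : ℝ}, a ≤ b → OrliczBall V₂ a n ⊆ OrliczBall V₂ b n := fun hab x hx =>
    le_trans (show ∑ i, V₂ (x i) ≤ _ from hx) (mul_le_mul_of_nonneg_right hab n.cast_nonneg)
  have hm1 := hV₁.measurableSet_orliczBall 1 n
  have hm2 := hV₂.measurableSet_orliczBall (R + ε) n
  obtain ⟨hp1, h1⟩ := hN n hn (OrliczBall V₁ 1 n ∩ OrliczBall V₂ (R + ε) n) (hm1.inter hm2)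
    (fun e x => and_congr (orliczBall_comp_perm V₁ 1 e x) (orliczBall_comp_perm V₂ (R + ε) e x))
    (Set.inter_subset_inter_right _ (hmono (by linarith)))
    (Set.inter_subset_right.trans (hmono (by linarith)))
  obtain ⟨hp2, h2⟩ := hN n hn (OrliczBall V₂ R n) (hV₂.measurableSet_orliczBall R n)
    (fun e x => orliczBall_comp_perm V₂ R e x) Set.inter_subset_right (hmono (by linarith))
  have hcond : ProbabilityTheory.cond (unifBall V₁ 1 n) (OrliczBall V₂ (R + ε) n) =
      ProbabilityTheory.cond volume (OrliczBall V₁ 1 n ∩ OrliczBall V₂ (R + ε) n) :=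
    ProbabilityTheory.cond_cond_eq_cond_inter' hm1 hm2 (hV₁.volume_orliczBall_ne_top 1 n)
  have hunif : unifBall V₂ R n = ProbabilityTheory.cond volume (OrliczBall V₂ R n) := rfl
  rw [hcond, hunif]
  have hproj := measurable_proj k n
  have := isProbabilityMeasure_gibbs (hexp α hα)
  have := Measure.isProbabilityMeasure_map
    (μ := ProbabilityTheory.cond volume (OrliczBall V₁ 1 n ∩ OrliczBall V₂ (R + ε) n))
    hproj.aemeasurable
  have := Measure.isProbabilityMeasure_map
    (μ := ProbabilityTheory.cond volume (OrliczBall V₂ R n)) hproj.aemeasurable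
  have hle := levyProkhorovEDist_le_of_real_le
    (Measure.map (proj k n)
      (ProbabilityTheory.cond volume (OrliczBall V₁ 1 n ∩ OrliczBall V₂ (R + ε) n)))
    (Measure.map (proj k n) (ProbabilityTheory.cond volume (OrliczBall V₂ R n)))
    (Measure.pi fun _ : Fin k => gibbs V₂ α) (η := δ / 4) (by positivity)
    (fun A hA => by rw [map_measureReal_apply hproj hA]; exact h1 A hA)
    (fun A hA => by rw [map_measureReal_apply hproj hA]; exact h2 A hA)
  calc levyProkhorovDist _ _ ≤ 2 * (δ / 4) := ENNReal.toReal_le_of_le_ofReal (by positivity) hle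
    _ < δ := by linarith
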